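/- arXiv:math/0503532 — 5 statements merged into one kernel-verified Lean document; each statement's English description precedes it below -/
import Mathlib

section
/- Assume (SA0)–(SA2). For every β with 1/2 < β < 1, there exist x̄ < ∞, γ̄ > 0 and s > 0 such that: (i) K_γ V_s(x)/V_s(x) ≤ r(γ,s) for all x ∈ ℝ and all γ > s; and (ii) K_γ V_s(x)/V_s(x) ≤ β for all |x| ≥ x̄ and all γ ≥ γ̄. -/
/-!
The chain moves by `z` distributed according to the symmetric density `q`. Given `z`, the expected
value of `V_s(X₁) / V_s(x)` depends only on the change `t = f (x + z) - f x`, and is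
`a e^{s t} + (1 - a)` with acceptance probability `a = min 1 (e^{-γ t})`.

For `t ≤ 0` this factor is `e^{s t} ≤ 1`. For `t ≥ 0` it is `1 + w^{p-1} - w^p` with `w = e^{-s t}`
and `p = γ / s`, which Bernoulli's inequality bounds by its value `r(γ,s)` at `w = (p-1)/p`.
Averaging over `z` gives (i).

For (ii), a symmetric law without atoms gives mass close to `1/2` to some `[η, M]` with `η > 0`.
If `|x|` is large, all moves towards the origin with length in `[η, M]` decrease `f` by at least
`α η`, so the ratio is at most `e^{-s α η} + r(γ,s) c` with `c > 1/2` as close to `1/2` as desired.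
Now take `s` large, and then `γ` large, since `r(γ,s) → 1` as `γ → ∞`.
-/

open MeasureTheory Set
open scoped ENNReal

/-- The random walk Metropolis–Hastings kernel `K_γ`. -/
noncomputable def rwmKernel (f q : ℝ → ℝ) (γ x : ℝ) : Measure ℝ :=
  volume.withDensity
      (fun y => ENNReal.ofReal (min 1 (Real.exp (-γ * (f y - f x))) * q (y - x))) +
    (∫⁻ y, ENNReal.ofReal ((1 - min 1 (Real.exp (-γ * (f y - f x)))) * q (y - x))) •
      Measure.dirac x

/-- `r(γ,s) = 1 - ((γ-s)/γ)^{γ/s} + ((γ-s)/γ)^{(γ-s)/s}` (see (36)). -/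
noncomputable def rateFun (γ s : ℝ) : ℝ :=
  1 - ((γ - s) / γ) ^ (γ / s) + ((γ - s) / γ) ^ ((γ - s) / s)

open Filter Topology

section Rate

lemma rpow_sub_one_sub_rpow_le {p w : ℝ} (hp : 1 < p) (hw : 0 < w) :
    w ^ (p - 1) - w ^ p ≤ ((p - 1) / p) ^ (p - 1) - ((p - 1) / p) ^ p := by
  have hm0 : 0 < (p - 1) / p := div_pos (by linarith) (by linarith)
  have hpm : p * ((p - 1) / p) = p - 1 := mul_div_cancel₀ _ (by linarith)
  generalize (p - 1) / p = m at hm0 hpm ⊢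
  have split {u : ℝ} (hu : 0 < u) : u ^ p = u ^ (p - 1) * u := by
    rw [← Real.rpow_add_one hu.ne', sub_add_cancel]
  have bernoulli : 1 + p * (m / w - 1) ≤ m ^ p / w ^ p := by
    have h := one_add_mul_self_le_rpow_one_add (s := m / w - 1)
      (by linarith [div_pos hm0 hw]) hp.le
    rwa [add_sub_cancel, Real.div_rpow hm0.le hw.le] at h
  rw [le_div_iff₀ (by positivity), split hw, split hm0] at bernoulli
  rw [split hw, split hm0]
  refine le_of_mul_le_mul_left ?_ (sub_pos.2 hp)
  calc (p - 1) * (w ^ (p - 1) - w ^ (p - 1) * w)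
      = (1 + p * (m / w - 1)) * (w ^ (p - 1) * w) := by
        linear_combination (-w ^ (p - 1)) * (hpm + p * div_mul_cancel₀ m hw.ne')
    _ ≤ m ^ (p - 1) * m := bernoulli
    _ = (p - 1) * (m ^ (p - 1) - m ^ (p - 1) * m) := by
        linear_combination m ^ (p - 1) * hpm

lemma rateFun_eq_one_add {s : ℝ} (hs : s ≠ 0) (γ : ℝ) :
    rateFun γ s =
      1 + (((γ / s - 1) / (γ / s)) ^ (γ / s - 1) - ((γ / s - 1) / (γ / s)) ^ (γ / s)) := by
  rw [div_sub_one hs, div_div_div_cancel_right₀ hs, rateFun]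
  ring

lemma rateFun_le_one_add_div {γ s : ℝ} (hs : 0 < s) (hsγ : s < γ) :
    rateFun γ s ≤ 1 + s / γ := by
  have hγ : 0 < γ := hs.trans hsγ
  set m := (γ - s) / γ with hm
  have hm0 : 0 < m := div_pos (sub_pos.2 hsγ) hγ
  have hm1 : 1 - m = s / γ := by rw [hm]; field_simp; ring
  have hpow : m ^ ((γ - s) / s) ≤ 1 :=
    Real.rpow_le_one hm0.le (by linarith [div_pos hs hγ])
      (div_nonneg (sub_pos.2 hsγ).le hs.le)
  have hsplit : m ^ (γ / s) = m ^ ((γ - s) / s) * m := by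
    rw [← Real.rpow_add_one hm0.ne', sub_div, div_self hs.ne', sub_add_cancel]
  calc rateFun γ s = 1 + m ^ ((γ - s) / s) * (1 - m) := by rw [rateFun, ← hm, hsplit]; ring
    _ ≤ 1 + s / γ := by
      rw [hm1]
      gcongr
      exact mul_le_of_le_one_left (by positivity) hpow

/-- The conditional expectation of `V_s(X₁) / V_s(x)` for the kernel `K_γ` started at `x`, given a
proposal `y` with `f y - f x = t`. -/
noncomputable def driftFactor (γ s t : ℝ) : ℝ :=
  min 1 (Real.exp (-γ * t)) * Real.exp (s * t) + (1 - min 1 (Real.exp (-γ * t)))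

lemma driftFactor_of_nonpos {γ t : ℝ} (hγ : 0 ≤ γ) (ht : t ≤ 0) (s : ℝ) :
    driftFactor γ s t = Real.exp (s * t) := by
  rw [driftFactor, min_eq_left (Real.one_le_exp (by nlinarith))]
  ring

lemma driftFactor_of_nonneg {γ t : ℝ} (hγ : 0 ≤ γ) (ht : 0 ≤ t) (s : ℝ) :
    driftFactor γ s t = 1 + (Real.exp ((s - γ) * t) - Real.exp (-γ * t)) := by
  have hexp : Real.exp ((s - γ) * t) = Real.exp (-γ * t) * Real.exp (s * t) := by
    rw [← Real.exp_add]; ring_nf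
  rw [driftFactor, min_eq_right (Real.exp_le_one_iff.2 (by nlinarith)), hexp]
  ring

lemma driftFactor_le_rateFun_of_nonneg {γ s t : ℝ} (hs : 0 < s) (hsγ : s < γ) (ht : 0 ≤ t) :
    driftFactor γ s t ≤ rateFun γ s := by
  rw [driftFactor_of_nonneg (hs.trans hsγ).le ht, rateFun_eq_one_add hs.ne']
  have h := rpow_sub_one_sub_rpow_le ((one_lt_div hs).2 hsγ) (Real.exp_pos (-(s * t)))
  have e₁ : -(s * t) * (γ / s - 1) = (s - γ) * t := by field_simp; ring
  have e₂ : -(s * t) * (γ / s) = -γ * t := by field_simp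
  rw [← Real.exp_mul, ← Real.exp_mul, e₁, e₂] at h
  gcongr

lemma one_le_rateFun {γ s : ℝ} (hs : 0 < s) (hsγ : s < γ) : 1 ≤ rateFun γ s := by
  simpa [driftFactor] using driftFactor_le_rateFun_of_nonneg hs hsγ le_rfl

lemma driftFactor_le_rateFun {γ s : ℝ} (hs : 0 < s) (hsγ : s < γ) (t : ℝ) :
    driftFactor γ s t ≤ rateFun γ s := by
  rcases le_total 0 t with ht | ht
  · exact driftFactor_le_rateFun_of_nonneg hs hsγ ht
  · rw [driftFactor_of_nonpos (hs.trans hsγ).le ht]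
    exact (Real.exp_le_one_iff.2 (mul_nonpos_of_nonneg_of_nonpos hs.le ht)).trans
      (one_le_rateFun hs hsγ)

lemma driftFactor_le_exp_neg {γ s t δ : ℝ} (hγ : 0 ≤ γ) (hs : 0 ≤ s) (hδ : 0 ≤ δ)
    (ht : t ≤ -δ) : driftFactor γ s t ≤ Real.exp (-(s * δ)) := by
  rw [driftFactor_of_nonpos hγ (by linarith), ← mul_neg]
  gcongr

lemma tendsto_rateFun_atTop {s : ℝ} (hs : 0 < s) :
    Tendsto (fun γ => rateFun γ s) atTop (𝓝 1) := by
  have hupper : Tendsto (fun γ : ℝ => 1 + s / γ) atTop (𝓝 1) := by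
    simpa using (tendsto_const_nhds (x := (1 : ℝ))).add (tendsto_id.const_div_atTop s)
  refine tendsto_of_tendsto_of_tendsto_of_le_of_le' tendsto_const_nhds hupper ?_ ?_
  · filter_upwards [eventually_gt_atTop s] with γ hγ using one_le_rateFun hs hγ
  · filter_upwards [eventually_gt_atTop s] with γ hγ using rateFun_le_one_add_div hs hγ

lemma exists_exp_neg_add_rateFun_mul_le {c β δ : ℝ} (hcβ : c < β) (hδ : 0 < δ) :
    ∃ s : ℝ, 0 < s ∧ ∃ γbar : ℝ, s < γbar ∧
      ∀ γ, γbar ≤ γ → Real.exp (-(s * δ)) + rateFun γ s * c ≤ β := by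
  have hexp : Tendsto (fun s : ℝ => Real.exp (-(s * δ)) + c) atTop (𝓝 c) := by
    simpa using (Real.tendsto_exp_neg_atTop_nhds_zero.comp
      (tendsto_id.atTop_mul_const hδ)).add_const c
  obtain ⟨s, hs, hsc⟩ := ((eventually_gt_atTop 0).and (hexp.eventually_lt_const hcβ)).exists
  have hrate : Tendsto (fun γ => Real.exp (-(s * δ)) + rateFun γ s * c) atTop
      (𝓝 (Real.exp (-(s * δ)) + c)) := by
    simpa using ((tendsto_rateFun_atTop hs).mul_const c).const_add (Real.exp (-(s * δ)))
  obtain ⟨γ₀, hγ₀⟩ := eventually_atTop.1 (hrate.eventually_le_const hsc)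
  exact ⟨s, hs, max γ₀ (s + 1), by simp, fun γ hγ => hγ₀ γ ((le_max_left _ _).trans hγ)⟩

end Rate

section Measure

lemma withDensity_isNegInvariant {G : Type*} [MeasurableSpace G] [InvolutiveNeg G]
    [MeasurableNeg G] {μ : Measure G} [μ.IsNegInvariant] {g : G → ℝ≥0∞}
    (hg : ∀ x, g (-x) = g x) : (μ.withDensity g).IsNegInvariant := by
  refine ⟨Measure.ext fun A hA => ?_⟩
  rw [Measure.neg_apply, withDensity_apply _ hA.neg, withDensity_apply _ hA,
    ← (Measure.measurePreserving_neg μ).setLIntegral_comp_preimage_emb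
      (MeasurableEquiv.neg G).measurableEmbedding g A]
  simp only [hg]
  rfl

lemma exists_Icc_lt_measure_of_lt_measure_Ioi {X : Type*} [LinearOrder X] [TopologicalSpace X]
    [OrderClosedTopology X] [MeasurableSpace X] {μ : Measure X} [μ.Regular] {a : X} {r : ℝ≥0∞}
    (hr : r < μ (Ioi a)) : ∃ b c, a < b ∧ r < μ (Icc b c) := by
  obtain ⟨K, hKa, hK, hrK⟩ := isOpen_Ioi.exists_lt_isCompact hr
  have hne : K.Nonempty := nonempty_of_measure_ne_zero (pos_of_gt hrK).ne'
  obtain ⟨b, hbK, hb⟩ := hK.exists_isLeast hne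
  obtain ⟨c, -, hc⟩ := hK.exists_isGreatest hne
  exact ⟨b, c, hKa hbK, hrK.trans_le (measure_mono fun _ hy => ⟨hb hy, hc hy⟩)⟩

lemma lintegral_le_add_mul_measure_compl {X : Type*} [MeasurableSpace X] {μ : Measure X}
    [IsProbabilityMeasure μ] {S : Set X} (hS : MeasurableSet S) {g : X → ℝ≥0∞} {a b : ℝ≥0∞}
    (ha : ∀ x ∈ S, g x ≤ a) (hb : ∀ x, g x ≤ b) : ∫⁻ x, g x ∂μ ≤ a + b * μ Sᶜ := by
  calc ∫⁻ x, g x ∂μ = ∫⁻ x in S, g x ∂μ + ∫⁻ x in Sᶜ, g x ∂μ := (lintegral_add_compl g hS).symm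
    _ ≤ ∫⁻ _ in S, a ∂μ + ∫⁻ _ in Sᶜ, b ∂μ :=
      add_le_add (setLIntegral_mono measurable_const ha)
        (setLIntegral_mono measurable_const fun x _ => hb x)
    _ = a * μ S + b * μ Sᶜ := by rw [setLIntegral_const, setLIntegral_const]
    _ ≤ a + b * μ Sᶜ := by gcongr; exact mul_le_of_le_one_right' prob_le_one

section Symmetric

variable {G : Type*} [AddCommGroup G] [LinearOrder G] [IsOrderedAddMonoid G] [TopologicalSpace G]
  [OrderClosedTopology G] [MeasurableSpace G] [OpensMeasurableSpace G] [MeasurableNeg G]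
  {μ : Measure G} [IsProbabilityMeasure μ] [NullSingletonClass μ] [μ.IsNegInvariant]

lemma measure_Ioi_zero_eq_half : μ (Ioi 0) = 1 / 2 := by
  have hIic : μ (Iic 0) = μ (Ioi 0) := by
    rw [← measure_congr Iio_ae_eq_Iic, ← Measure.measure_neg μ (Ioi 0), neg_Ioi, neg_zero]
  have hsum : 2 * μ (Ioi 0) = 1 := by
    rw [two_mul, ← prob_add_prob_compl (μ := μ) (s := Ioi 0) measurableSet_Ioi, compl_Ioi, hIic]
  exact (ENNReal.eq_div_iff two_ne_zero ENNReal.ofNat_ne_top).2 hsum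

lemma exists_measure_compl_Icc_lt [μ.Regular] {c : ℝ≥0∞} (hc : 1 / 2 < c) :
    ∃ η M : G, 0 < η ∧ μ (Icc η M)ᶜ < c := by
  have h : 1 - c < μ (Ioi 0) := by
    rw [measure_Ioi_zero_eq_half]
    rcases le_total c 1 with hc1 | hc1
    · exact ENNReal.sub_lt_of_sub_lt hc1 (.inl ENNReal.one_ne_top) (by simpa using hc)
    · simp [tsub_eq_zero_of_le hc1]
  obtain ⟨η, M, hη, hM⟩ := exists_Icc_lt_measure_of_lt_measure_Ioi h
  refine ⟨η, M, hη, ?_⟩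
  rw [prob_compl_eq_one_sub measurableSet_Icc]
  exact ENNReal.sub_lt_of_lt_add prob_le_one <| lt_of_not_ge fun hle =>
    hM.not_ge <| ENNReal.le_sub_of_add_le_left
      (ne_top_of_le_ne_top ENNReal.one_ne_top (le_self_add.trans hle)) hle

end Symmetric

end Measure

section Kernel

/-- The law with density `q`, from which the proposed increments of the walk are drawn; negative
values of `q` are truncated to `0`. -/
noncomputable def incrementLaw (q : ℝ → ℝ) : Measure ℝ :=
  volume.withDensity fun z => ENNReal.ofReal (q z)

lemma isProbabilityMeasure_incrementLaw {q : ℝ → ℝ} (hq : ∀ z, 0 ≤ q z) (hint : ∫ z, q z = 1) :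
    IsProbabilityMeasure (incrementLaw q) := by
  refine ⟨?_⟩
  rw [incrementLaw, withDensity_apply _ MeasurableSet.univ, setLIntegral_univ,
    ← ofReal_integral_eq_lintegral_ofReal (.of_integral_ne_zero (by simp [hint])) (.of_forall hq),
    hint, ENNReal.ofReal_one]

lemma ofReal_move_add_ofReal_stay (γ s u v r : ℝ) :
    ENNReal.ofReal (min 1 (Real.exp (-γ * (v - u))) * r) * ENNReal.ofReal (Real.exp (s * v)) +
        ENNReal.ofReal ((1 - min 1 (Real.exp (-γ * (v - u)))) * r) *
          ENNReal.ofReal (Real.exp (s * u)) =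
      ENNReal.ofReal r * ENNReal.ofReal (driftFactor γ s (v - u)) *
        ENNReal.ofReal (Real.exp (s * u)) := by
  have hexp : Real.exp (s * v) = Real.exp (s * (v - u)) * Real.exp (s * u) := by
    rw [← Real.exp_add]; ring_nf
  have haccept : 0 ≤ min 1 (Real.exp (-γ * (v - u))) := le_min zero_le_one (Real.exp_pos _).le
  have hreject : 0 ≤ 1 - min 1 (Real.exp (-γ * (v - u))) := sub_nonneg.2 (min_le_left _ _)
  rw [hexp, driftFactor, ENNReal.ofReal_add (by positivity) hreject, ENNReal.ofReal_mul haccept,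
    ENNReal.ofReal_mul haccept, ENNReal.ofReal_mul hreject, ENNReal.ofReal_mul (Real.exp_pos _).le]
  ring

variable {f q : ℝ → ℝ}

lemma lintegral_exp_rwmKernel (hf : Measurable f) (hqm : AEMeasurable q) (γ s x : ℝ) :
    ∫⁻ y, ENNReal.ofReal (Real.exp (s * f y)) ∂(rwmKernel f q γ x) =
      (∫⁻ z, ENNReal.ofReal (driftFactor γ s (f (x + z) - f x)) ∂(incrementLaw q)) *
        ENNReal.ofReal (Real.exp (s * f x)) := by
  have hqx : AEMeasurable fun y => q (y - x) :=
    hqm.comp_quasiMeasurePreserving (measurePreserving_sub_right volume x).quasiMeasurePreserving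
  set a := fun y => min 1 (Real.exp (-γ * (f y - f x)))
  set V := fun y => ENNReal.ofReal (Real.exp (s * f y))
  have ham : Measurable a := by fun_prop
  have hmove : AEMeasurable fun y => ENNReal.ofReal (a y * q (y - x)) :=
    (ham.aemeasurable.mul hqx).ennreal_ofReal
  have hstay : AEMeasurable fun y => ENNReal.ofReal ((1 - a y) * q (y - x)) :=
    ((ham.const_sub 1).aemeasurable.mul hqx).ennreal_ofReal
  calc ∫⁻ y, V y ∂(rwmKernel f q γ x)
      = (∫⁻ y, ENNReal.ofReal (a y * q (y - x)) * V y)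
          + (∫⁻ y, ENNReal.ofReal ((1 - a y) * q (y - x))) * V x := by
        rw [rwmKernel, lintegral_add_measure, lintegral_smul_measure, lintegral_dirac,
          lintegral_withDensity_eq_lintegral_mul₀ hmove (by fun_prop), smul_eq_mul]
        rfl
    _ = ∫⁻ y, (ENNReal.ofReal (a y * q (y - x)) * V y
          + ENNReal.ofReal ((1 - a y) * q (y - x)) * V x) := by
        rw [← lintegral_mul_const'' _ hstay, ← lintegral_add_right' _ (hstay.mul_const _)]
    _ = ∫⁻ z, (ENNReal.ofReal (a (x + z) * q z) * V (x + z)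
          + ENNReal.ofReal ((1 - a (x + z)) * q z) * V x) := by
        rw [← lintegral_add_left_eq_self _ x]
        simp only [add_sub_cancel_left]
    _ = ∫⁻ z, ENNReal.ofReal (q z) * ENNReal.ofReal (driftFactor γ s (f (x + z) - f x)) * V x :=
        lintegral_congr fun z => ofReal_move_add_ofReal_stay γ s (f x) (f (x + z)) (q z)
    _ = (∫⁻ z, ENNReal.ofReal (driftFactor γ s (f (x + z) - f x)) ∂(incrementLaw q)) * V x := by
        rw [lintegral_mul_const' _ _ ENNReal.ofReal_ne_top, incrementLaw,
          lintegral_withDensity_eq_lintegral_mul₀ (by fun_prop) (by unfold driftFactor; fun_prop)]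
        rfl

lemma lintegral_exp_rwmKernel_le_rateFun [IsProbabilityMeasure (incrementLaw q)]
    (hf : Measurable f) (hqm : AEMeasurable q) {γ s : ℝ} (hs : 0 < s) (hsγ : s < γ) (x : ℝ) :
    ∫⁻ y, ENNReal.ofReal (Real.exp (s * f y)) ∂(rwmKernel f q γ x) ≤
      ENNReal.ofReal (rateFun γ s * Real.exp (s * f x)) := by
  rw [lintegral_exp_rwmKernel hf hqm,
    ENNReal.ofReal_mul (zero_le_one.trans (one_le_rateFun hs hsγ))]
  gcongr
  calc ∫⁻ z, ENNReal.ofReal (driftFactor γ s (f (x + z) - f x)) ∂(incrementLaw q)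
      ≤ ∫⁻ _, ENNReal.ofReal (rateFun γ s) ∂(incrementLaw q) :=
        lintegral_mono fun _ => ENNReal.ofReal_le_ofReal (driftFactor_le_rateFun hs hsγ _)
    _ = ENNReal.ofReal (rateFun γ s) := by simp

lemma lintegral_exp_rwmKernel_le_of_descent [IsProbabilityMeasure (incrementLaw q)]
    (hf : Measurable f) (hqm : AEMeasurable q) {γ s x δ c : ℝ} (hs : 0 < s) (hsγ : s < γ)
    (hδ : 0 ≤ δ) {S : Set ℝ} (hS : MeasurableSet S)
    (hdesc : ∀ z ∈ S, f (x + z) - f x ≤ -δ) (hc : 0 ≤ c)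
    (hmass : incrementLaw q Sᶜ ≤ ENNReal.ofReal c) :
    ∫⁻ y, ENNReal.ofReal (Real.exp (s * f y)) ∂(rwmKernel f q γ x) ≤
      ENNReal.ofReal ((Real.exp (-(s * δ)) + rateFun γ s * c) * Real.exp (s * f x)) := by
  have hr : 0 ≤ rateFun γ s := zero_le_one.trans (one_le_rateFun hs hsγ)
  rw [lintegral_exp_rwmKernel hf hqm, ENNReal.ofReal_mul (by positivity)]
  gcongr
  calc ∫⁻ z, ENNReal.ofReal (driftFactor γ s (f (x + z) - f x)) ∂(incrementLaw q)
      ≤ ENNReal.ofReal (Real.exp (-(s * δ))) +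
          ENNReal.ofReal (rateFun γ s) * incrementLaw q Sᶜ :=
        lintegral_le_add_mul_measure_compl hS
          (fun z hz => ENNReal.ofReal_le_ofReal
            (driftFactor_le_exp_neg (hs.trans hsγ).le hs.le hδ (hdesc z hz)))
          fun z => ENNReal.ofReal_le_ofReal (driftFactor_le_rateFun hs hsγ _)
    _ ≤ ENNReal.ofReal (Real.exp (-(s * δ))) +
          ENNReal.ofReal (rateFun γ s) * ENNReal.ofReal c := by gcongr
    _ = ENNReal.ofReal (Real.exp (-(s * δ)) + rateFun γ s * c) := by
        rw [← ENNReal.ofReal_mul hr, ENNReal.ofReal_add (by positivity) (by positivity)]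

lemma exists_descent_set {μ : Measure ℝ} [μ.IsNegInvariant] {α x₁ η M x : ℝ} (hα : 0 ≤ α)
    (hη : 0 ≤ η) (hright : ∀ x y : ℝ, x₁ ≤ x → x ≤ y → α * (y - x) ≤ f y - f x)
    (hleft : ∀ x y : ℝ, x ≤ -x₁ → y ≤ x → α * (x - y) ≤ f y - f x) (hx : x₁ + M ≤ |x|) :
    ∃ S, MeasurableSet S ∧ μ Sᶜ = μ (Icc η M)ᶜ ∧ ∀ z ∈ S, f (x + z) - f x ≤ -(α * η) := by
  rcases abs_cases x with ⟨hxabs, -⟩ | ⟨hxabs, -⟩ <;> rw [hxabs] at hx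
  · refine ⟨-Icc η M, measurableSet_Icc.neg, ?_, fun z ⟨hηz, hzM⟩ => ?_⟩
    · rw [← compl_neg, Measure.measure_neg]
    · have h := hright (x + z) x (by linarith) (by linarith)
      linarith [mul_le_mul_of_nonneg_left hηz hα]
  · refine ⟨Icc η M, measurableSet_Icc, rfl, fun z ⟨hηz, hzM⟩ => ?_⟩
    have h := hleft (x + z) x (by linarith) (by linarith)
    linarith [mul_le_mul_of_nonneg_left hηz hα]

end Kernel

theorem rwm_drift_general
    (f q : ℝ → ℝ) (hf : Measurable f) (α x₁ : ℝ) (hα : 0 < α)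
    (hgrow1 : ∀ x y : ℝ, x₁ ≤ x → x ≤ y → α * (y - x) ≤ f y - f x)
    (hgrow2 : ∀ x y : ℝ, x ≤ -x₁ → y ≤ x → α * (x - y) ≤ f y - f x)
    (hq : ∀ y, 0 ≤ q y) (hqsym : ∀ y, q (-y) = q y) (hqint : ∫ y, q y = 1)
    (β : ℝ) (hβ : 1 / 2 < β) :
    ∃ xbar γbar s : ℝ, 0 < γbar ∧ 0 < s ∧
      (∀ (x γ : ℝ), s < γ →
        ∫⁻ y, ENNReal.ofReal (Real.exp (s * f y)) ∂(rwmKernel f q γ x) ≤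
          ENNReal.ofReal (rateFun γ s * Real.exp (s * f x))) ∧
      (∀ (x γ : ℝ), xbar ≤ |x| → γbar ≤ γ →
        ∫⁻ y, ENNReal.ofReal (Real.exp (s * f y)) ∂(rwmKernel f q γ x) ≤
          ENNReal.ofReal (β * Real.exp (s * f x))) := by
  have hqm : AEMeasurable q :=
    (Integrable.of_integral_ne_zero (by simp [hqint])).aemeasurable
  have := isProbabilityMeasure_incrementLaw hq hqint
  have : (incrementLaw q).IsNegInvariant :=
    withDensity_isNegInvariant fun z => by rw [hqsym]
  have : NullSingletonClass (incrementLaw q) := nullSingletonClass_withDensity _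
  obtain ⟨c, hc, hcβ⟩ := exists_between hβ
  obtain ⟨η, M, hη, hmass⟩ := exists_measure_compl_Icc_lt (μ := incrementLaw q)
    (c := ENNReal.ofReal c) <| by
      rw [ENNReal.lt_ofReal_iff_toReal_lt (by simp)]
      simpa using hc
  have hδ : 0 < α * η := mul_pos hα hη
  obtain ⟨s, hs, γbar, hsγbar, hbound⟩ := exists_exp_neg_add_rateFun_mul_le hcβ hδ
  refine ⟨x₁ + M, γbar, s, hs.trans hsγbar, hs,
    fun x γ hsγ => lintegral_exp_rwmKernel_le_rateFun hf hqm hs hsγ x, fun x γ hx hγ => ?_⟩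
  obtain ⟨S, hS, hSmass, hdesc⟩ :=
    exists_descent_set (μ := incrementLaw q) hα.le hη.le hgrow1 hgrow2 hx
  refine (lintegral_exp_rwmKernel_le_of_descent hf hqm hs (hsγbar.trans_le hγ) hδ.le hS hdesc
    (by linarith) (hSmass.trans_le hmass.le)).trans (ENNReal.ofReal_le_ofReal ?_)
  gcongr
  exact hbound γ hγ

/-- Proposition 10: drift bounds for the RWMH kernels with drift function `V_s = e^{s f}`:
(i) `K_γ V_s / V_s ≤ r(γ,s)` everywhere, and (ii) `K_γ V_s / V_s ≤ β` for `|x| ≥ x̄` and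
`γ ≥ γ̄`. -/
theorem rwm_drift
    (f q : ℝ → ℝ)
    -- (SA0)
    (hf : ContDiff ℝ 2 f) (α x₁ : ℝ) (hα : 0 < α)
    (hgrow1 : ∀ x y : ℝ, x₁ ≤ x → x ≤ y → α * (y - x) ≤ f y - f x)
    (hgrow2 : ∀ x y : ℝ, x ≤ -x₁ → y ≤ x → α * (x - y) ≤ f y - f x)
    -- (SA1)
    (hSA1 : ∀ x : ℝ, (∀ y, f x ≤ f y) → 0 < deriv (deriv f) x)
    -- (SA2)
    (hqc : Continuous q) (hqpos : ∀ y, 0 < q y) (hqsym : ∀ y, q (-y) = q y)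
    (hqint : ∫ y, q y = 1)
    (β : ℝ) (hβ1 : 1 / 2 < β) (hβ2 : β < 1) :
    ∃ xbar γbar s : ℝ, 0 < γbar ∧ 0 < s ∧
      (∀ (x γ : ℝ), s < γ →
        ∫⁻ y, ENNReal.ofReal (Real.exp (s * f y)) ∂(rwmKernel f q γ x) ≤
          ENNReal.ofReal (rateFun γ s * Real.exp (s * f x))) ∧
      (∀ (x γ : ℝ), xbar ≤ |x| → γbar ≤ γ →
        ∫⁻ y, ENNReal.ofReal (Real.exp (s * f y)) ∂(rwmKernel f q γ x) ≤
          ENNReal.ofReal (β * Real.exp (s * f x))) :=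
  rwm_drift_general f q hf.continuous.measurable α x₁ hα hgrow1 hgrow2 (fun y => (hqpos y).le) hqsym
    hqint β hβ1
end

section
/- For all real numbers γ > s > 0 and all u > 0, φ_{γ,s}(u) ≤ φ_{γ,s}(((γ−s)/γ)^{1/s}) = 1 − ((γ−s)/γ)^{γ/s} + ((γ−s)/γ)^{(γ−s)/s}; that is, the function φ_{γ,s} attains its maximum over (0,∞) at u = ((γ−s)/γ)^{1/s}, with maximal value r(γ,s). -/
open Real

/-!
On `(0, 1]` we have `φ_{γ,s}(u) = 1 + u ^ (γ - s) - u ^ γ`, while on `[1, ∞)` we have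
`φ_{γ,s}(u) = u ^ (-s) ≤ 1 = φ_{γ,s}(1)`, so only the difference of powers `u ^ q - u ^ p` with
`q = γ - s` and `p = γ` has to be maximized. Its critical point `v` satisfies `v ^ (p - q) = q / p`,
and that `v` is a global maximum is exactly the weighted AM-GM inequality for `u ^ p` and `v ^ p`
with weights `q / p` and `1 - q / p`.
-/

theorem mul_rpow_mul_rpow_sub_le {p q u v : ℝ} (hp : 0 < p) (hq : 0 ≤ q) (hqp : q ≤ p)
    (hu : 0 ≤ u) (hv : 0 ≤ v) :
    p * (u ^ q * v ^ (p - q)) ≤ q * u ^ p + (p - q) * v ^ p := by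
  have amgm : (u ^ p) ^ (q / p) * (v ^ p) ^ ((p - q) / p) ≤
      q / p * u ^ p + (p - q) / p * v ^ p :=
    geom_mean_le_arith_mean2_weighted (div_nonneg hq hp.le)
      (div_nonneg (sub_nonneg.2 hqp) hp.le) (rpow_nonneg hu p) (rpow_nonneg hv p)
      (by field_simp; ring)
  rw [← rpow_mul hu, ← rpow_mul hv, mul_div_cancel₀ _ hp.ne', mul_div_cancel₀ _ hp.ne'] at amgm
  calc p * (u ^ q * v ^ (p - q))
      ≤ p * (q / p * u ^ p + (p - q) / p * v ^ p) := mul_le_mul_of_nonneg_left amgm hp.le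
    _ = q * u ^ p + (p - q) * v ^ p := by field_simp

theorem isMaxOn_rpow_sub_rpow {p q v : ℝ} (hq : 0 < q) (hqp : q ≤ p) (hv : 0 ≤ v)
    (hvpq : v ^ (p - q) = q / p) :
    IsMaxOn (fun u : ℝ ↦ u ^ q - u ^ p) (Set.Ici 0) v := by
  intro u hu
  have hp : 0 < p := hq.trans_le hqp
  have critical : p * v ^ p = q * v ^ q := by
    calc p * v ^ p = p * (v ^ (p - q) * v ^ q) := by
          rw [← rpow_add_of_nonneg hv (sub_nonneg.2 hqp) hq.le, sub_add_cancel]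
      _ = q * v ^ q := by rw [hvpq]; field_simp
  refine le_of_mul_le_mul_left ?_ hq
  calc q * (u ^ q - u ^ p) = p * (u ^ q * v ^ (p - q)) - q * u ^ p := by
        rw [hvpq]; field_simp
    _ ≤ (p - q) * v ^ p :=
        sub_le_iff_le_add'.2 (mul_rpow_mul_rpow_sub_le hp hq.le hqp hu hv)
    _ = q * (v ^ q - v ^ p) := by linear_combination critical

/-- The function `φ_{γ,s}`, to be maximized over `u > 0`; for `u ≤ 0` it only has the values that
the conventions for real powers give it. -/
noncomputable def phi (γ s u : ℝ) : ℝ :=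
  u ^ (-s) * min (u ^ γ) 1 + (1 - min (u ^ γ) 1)

section phi

variable {γ s u v : ℝ}

theorem phi_of_le_one (hγ : 0 ≤ γ) (hu : 0 < u) (hu1 : u ≤ 1) :
    phi γ s u = 1 + (u ^ (γ - s) - u ^ γ) := by
  rw [phi, min_eq_left (rpow_le_one hu.le hu1 hγ), ← rpow_add hu, neg_add_eq_sub]
  ring

theorem phi_of_one_le (hγ : 0 ≤ γ) (hu : 1 ≤ u) : phi γ s u = u ^ (-s) := by
  rw [phi, min_eq_right (one_le_rpow hu hγ), mul_one, sub_self, add_zero]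

theorem phi_le_phi_one (hγ : 0 ≤ γ) (hs : 0 ≤ s) (hu : 1 ≤ u) : phi γ s u ≤ phi γ s 1 := by
  rw [phi_of_one_le hγ hu, phi_of_one_le hγ le_rfl, one_rpow]
  exact rpow_le_one_of_one_le_of_nonpos hu (neg_nonpos.2 hs)

theorem isMaxOn_phi (hs : 0 ≤ s) (hsγ : s < γ) (hv : 0 < v) (hv1 : v ≤ 1)
    (hvs : v ^ s = (γ - s) / γ) : IsMaxOn (phi γ s) (Set.Ioi 0) v := by
  have hγ : 0 ≤ γ := hs.trans hsγ.le
  have le_of_le_one : ∀ u, 0 < u → u ≤ 1 → phi γ s u ≤ phi γ s v := by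
    intro u hu hu1
    rw [phi_of_le_one hγ hu hu1, phi_of_le_one hγ hv hv1]
    have hmax : IsMaxOn (fun x : ℝ ↦ x ^ (γ - s) - x ^ γ) (Set.Ici 0) v :=
      isMaxOn_rpow_sub_rpow (sub_pos.2 hsγ) (sub_le_self γ hs) hv.le (by rwa [sub_sub_cancel])
    exact add_le_add_right (hmax hu.le) 1
  intro u hu
  rcases le_total u 1 with hu1 | hu1
  · exact le_of_le_one u hu hu1
  · exact (phi_le_phi_one hγ hs hu1).trans (le_of_le_one 1 one_pos le_rfl)

end phi

/-- For `γ > s > 0`, the function `φ_{γ,s}(u) = u^{-s} min(u^γ, 1) + 1 - min(u^γ, 1)` attains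
its maximum over `(0,∞)` at `u = ((γ-s)/γ)^{1/s}`, with maximal value
`r(γ,s) = 1 - ((γ-s)/γ)^{γ/s} + ((γ-s)/γ)^{(γ-s)/s}` (see (38)). -/
theorem phi_max
    (γ s : ℝ) (hs : 0 < s) (hsγ : s < γ) :
    (∀ u : ℝ, 0 < u →
      u ^ (-s) * min (u ^ γ) 1 + (1 - min (u ^ γ) 1) ≤
        (((γ - s) / γ) ^ (1 / s)) ^ (-s) * min ((((γ - s) / γ) ^ (1 / s)) ^ γ) 1 +
          (1 - min ((((γ - s) / γ) ^ (1 / s)) ^ γ) 1)) ∧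
    (((γ - s) / γ) ^ (1 / s)) ^ (-s) * min ((((γ - s) / γ) ^ (1 / s)) ^ γ) 1 +
        (1 - min ((((γ - s) / γ) ^ (1 / s)) ^ γ) 1) =
      1 - ((γ - s) / γ) ^ (γ / s) + ((γ - s) / γ) ^ ((γ - s) / s) := by
  have hγ : 0 < γ := hs.trans hsγ
  have ha : 0 < (γ - s) / γ := div_pos (sub_pos.2 hsγ) hγ
  have ha1 : (γ - s) / γ ≤ 1 := (div_le_one hγ).2 (sub_le_self γ hs.le)
  set a := (γ - s) / γ
  have hv : 0 < a ^ (1 / s) := rpow_pos_of_pos ha _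
  have hv1 : a ^ (1 / s) ≤ 1 := rpow_le_one ha.le ha1 (one_div_nonneg.2 hs.le)
  have rpow_maximizer (t : ℝ) : (a ^ (1 / s)) ^ t = a ^ (t / s) := by
    rw [← rpow_mul ha.le, one_div_mul_eq_div]
  have hvs : (a ^ (1 / s)) ^ s = a := by
    rw [rpow_maximizer, div_self hs.ne', rpow_one]
  refine ⟨isMaxOn_iff.1 (isMaxOn_phi hs.le hsγ hv hv1 hvs), ?_⟩
  calc phi γ s (a ^ (1 / s))
      = 1 + (a ^ ((γ - s) / s) - a ^ (γ / s)) := by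
        rw [phi_of_le_one hγ.le hv hv1, rpow_maximizer, rpow_maximizer]
    _ = 1 - a ^ (γ / s) + a ^ ((γ - s) / s) := by ring
end

section
/- Assume (SA0)–(SA2). For all s > 0 and all c ≥ 1, the set {x ∈ ℝ : V_s(x) ≤ c} is compact. Moreover, there exist constants 0 ≤ λ_0 < λ < 1, s > 0, c_0 ≤ c, b < ∞ and γ̄ > 0 such that for all γ ≥ γ̄: (i) K_γ V_s ≤ λ_0 V_s + b 1_{{V_s ≤ c_0}}, and (ii) K̄_γ V̄_s ≤ λ V̄_s + b 1_{{V_s ≤ c} × {V_s ≤ c}}, where K̄_γ(x,x'; A×A') := K_γ(x,A) K_γ(x',A') and V̄_s(x,x') := (V_s(x) + V_s(x'))/2. -/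
/-!
Write `V = e^f` and `d = f y - f x`. Given the proposal `y`, one step from `x` multiplies `V` on
average by `1 + a (e^d - 1)`, where `a = min 1 e^{-γ d}` is the acceptance probability. If `d > 0`,
Bernoulli's inequality bounds this by `1 + 1/γ`; if `d ≤ 0` the proposal is accepted, so the factor
is `e^d ≤ 1`. Hence `K_γ V ≤ V (1 + 1/γ - (1 - e^{-δ}) m)`, where `m` is the probability that the
proposal lowers `f` by at least `δ`. Linear growth keeps `m` bounded away from zero far from the
origin, and there the gain beats `1/γ` once `γ` is large; elsewhere `V` is bounded.

The bivariate drift holds because `K_γ` is a probability kernel: if `V` exceeds `c` at one of two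
points, their average exceeds `c / 2`, so for `c` large the additive constant is absorbed by
enlarging `λ₀` to `λ`. A general exponent `s` reduces to `s = 1`, since `(f, γ)` and `(s f, γ / s)`
have the same kernel.
-/

open MeasureTheory Set
open scoped ENNReal

open Filter

section SublevelSets

lemma isCompact_setOf_le_of_tendsto_cocompact_atTop {X β : Type*} [TopologicalSpace X]
    [TopologicalSpace β] [LinearOrder β] [OrderClosedTopology β] [NoMaxOrder β] {g : X → β}
    (hg : Continuous g) (hlim : Tendsto g (cocompact X) atTop) (c : β) :
    IsCompact {x | g x ≤ c} := by
  obtain ⟨t, ht, hsub⟩ := mem_cocompact'.1 (hlim.eventually_gt_atTop c)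
  exact ht.of_isClosed_subset (isClosed_le hg continuous_const)
    fun x hx => hsub (not_lt.2 hx)

/-- The growth condition (SA0): moving away from the origin, `f` increases at rate at least `α` to
the right of `x₁` and to the left of `-x₁`. -/
structure HasLinearGrowth (f : ℝ → ℝ) (α x₁ : ℝ) : Prop where
  right : ∀ x y, x₁ ≤ x → x ≤ y → α * (y - x) ≤ f y - f x
  left : ∀ x y, x ≤ -x₁ → y ≤ x → α * (x - y) ≤ f y - f x

namespace HasLinearGrowth

variable {f : ℝ → ℝ} {α x₁ : ℝ}

lemma const_mul (h : HasLinearGrowth f α x₁) {s : ℝ} (hs : 0 ≤ s) :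
    HasLinearGrowth (fun x => s * f x) (s * α) x₁ where
  right x y hx hy := by linarith [mul_le_mul_of_nonneg_left (h.right x y hx hy) hs]
  left x y hx hy := by linarith [mul_le_mul_of_nonneg_left (h.left x y hx hy) hs]

lemma tendsto_cocompact_atTop (h : HasLinearGrowth f α x₁) (hα : 0 < α) :
    Tendsto f (cocompact ℝ) atTop := by
  rw [cocompact_eq_atBot_atTop, tendsto_sup]
  constructor
  · have hline : Tendsto (fun y => f (-x₁) + α * (-x₁ - y)) atBot atTop :=
      tendsto_atTop_add_const_left _ _
        ((tendsto_atTop_add_const_left _ _ tendsto_neg_atBot_atTop).const_mul_atTop hα)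
    refine tendsto_atTop_mono' _ ?_ hline
    filter_upwards [eventually_le_atBot (-x₁)] with y hy
    linarith [h.left (-x₁) y le_rfl hy]
  · have hline : Tendsto (fun y => f x₁ + α * (y - x₁)) atTop atTop :=
      tendsto_atTop_add_const_left _ _
        ((tendsto_atTop_add_const_right _ _ tendsto_id).const_mul_atTop hα)
    refine tendsto_atTop_mono' _ ?_ hline
    filter_upwards [eventually_ge_atTop x₁] with y hy
    linarith [h.right x₁ y le_rfl hy]

lemma isCompact_setOf_exp_le (h : HasLinearGrowth f α x₁) (hα : 0 < α) (hf : Continuous f)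
    (c : ℝ) : IsCompact {x | Real.exp (f x) ≤ c} :=
  isCompact_setOf_le_of_tendsto_cocompact_atTop hf.rexp
    (Real.tendsto_exp_atTop.comp (h.tendsto_cocompact_atTop hα)) c

end HasLinearGrowth

end SublevelSets

section GeometricDrift

variable {X Y : Type*} [MeasurableSpace X] [MeasurableSpace Y]

/-- The geometric drift condition `κ V ≤ lam V + b 1_C` for a transition kernel `κ`, with drift
function `V` and small set `C`. No measurability of `κ` is required. -/
def GeometricDrift (κ : X → Measure X) (V : X → ℝ) (lam b : ℝ) (C : Set X) : Prop :=
  ∀ x, ∫⁻ y, ENNReal.ofReal (V y) ∂(κ x) ≤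
    ENNReal.ofReal (lam * V x + C.indicator (fun _ => b) x)

lemma lintegral_prod_ofReal_average {μ : Measure X} {ν : Measure Y} [IsProbabilityMeasure μ]
    [IsProbabilityMeasure ν] {g : X → ℝ} {h : Y → ℝ} (hg : Measurable g) (hh : Measurable h)
    (hg0 : ∀ x, 0 ≤ g x) (hh0 : ∀ y, 0 ≤ h y) :
    ∫⁻ z, ENNReal.ofReal ((g z.1 + h z.2) / 2) ∂(μ.prod ν) =
      (∫⁻ x, ENNReal.ofReal (g x) ∂μ + ∫⁻ y, ENNReal.ofReal (h y) ∂ν) / 2 := by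
  simp_rw [ENNReal.ofReal_div_of_pos two_pos, ENNReal.ofReal_add (hg0 _) (hh0 _),
    div_eq_mul_inv]
  rw [lintegral_mul_const _ (by fun_prop), lintegral_add_left (by fun_prop),
    measurePreserving_fst.lintegral_comp hg.ennreal_ofReal,
    measurePreserving_snd.lintegral_comp hh.ennreal_ofReal, ENNReal.ofReal_ofNat]

lemma GeometricDrift.prod {κ : X → Measure X} [∀ x, IsProbabilityMeasure (κ x)] {V : X → ℝ}
    {lam₀ lam b c : ℝ} {C : Set X} (hdrift : GeometricDrift κ V lam₀ b C) (hV : Measurable V)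
    (hV0 : ∀ x, 0 ≤ V x) (hlam₀ : 0 ≤ lam₀) (hlam : lam₀ ≤ lam) (hb : 0 ≤ b)
    (hc : 2 * b ≤ (lam - lam₀) * c) :
    GeometricDrift (fun p : X × X => (κ p.1).prod (κ p.2)) (fun p => (V p.1 + V p.2) / 2) lam b
      ({x | V x ≤ c} ×ˢ {x | V x ≤ c}) := by
  rintro ⟨x, x'⟩
  set B := fun y => lam₀ * V y + C.indicator (fun _ => b) y
  have hB0 (y : X) : 0 ≤ B y :=
    add_nonneg (mul_nonneg hlam₀ (hV0 y)) (indicator_nonneg (fun _ _ => hb) y)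
  have hBle (y : X) : B y ≤ lam₀ * V y + b :=
    add_le_add_right (indicator_le_self' (fun _ _ => hb) y) _
  calc ∫⁻ z, ENNReal.ofReal ((V z.1 + V z.2) / 2) ∂((κ x).prod (κ x'))
      = (∫⁻ y, ENNReal.ofReal (V y) ∂(κ x) + ∫⁻ y, ENNReal.ofReal (V y) ∂(κ x')) / 2 :=
        lintegral_prod_ofReal_average hV hV hV0 hV0
    _ ≤ (ENNReal.ofReal (B x) + ENNReal.ofReal (B x')) / 2 := by
        gcongr <;> exact hdrift _
    _ = ENNReal.ofReal ((B x + B x') / 2) := by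
        rw [← ENNReal.ofReal_add (hB0 x) (hB0 x'), ENNReal.ofReal_div_of_pos two_pos,
          ENNReal.ofReal_ofNat]
    _ ≤ _ := ENNReal.ofReal_le_ofReal ?_
  have hlamV : 0 ≤ (lam - lam₀) * (V x + V x') :=
    mul_nonneg (sub_nonneg.2 hlam) (add_nonneg (hV0 x) (hV0 x'))
  by_cases hmem : (x, x') ∈ {y | V y ≤ c} ×ˢ {y | V y ≤ c}
  · rw [indicator_of_mem hmem]
    linarith [hBle x, hBle x']
  · have hsum : c ≤ V x + V x' := by
      by_contra! hlt
      exact hmem ⟨show V x ≤ c by linarith [hV0 x'], show V x' ≤ c by linarith [hV0 x]⟩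
    rw [indicator_of_notMem hmem]
    linarith [hBle x, hBle x', mul_le_mul_of_nonneg_left hsum (sub_nonneg.2 hlam)]

end GeometricDrift

section AcceptProb

/-- The Metropolis acceptance probability `α_γ(x, y)`, in the form in which it occurs in
`rwmKernel`. -/
noncomputable def acceptProb (f : ℝ → ℝ) (γ x y : ℝ) : ℝ :=
  min 1 (Real.exp (-γ * (f y - f x)))

variable {f : ℝ → ℝ} {γ x y : ℝ}

lemma acceptProb_nonneg : 0 ≤ acceptProb f γ x y := le_min zero_le_one (Real.exp_pos _).le

lemma acceptProb_le_one : acceptProb f γ x y ≤ 1 := min_le_left _ _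

lemma acceptProb_eq_one (hγ : 0 ≤ γ) (h : f y ≤ f x) : acceptProb f γ x y = 1 :=
  min_eq_left (Real.one_le_exp
    (mul_nonneg_of_nonpos_of_nonpos (neg_nonpos.2 hγ) (sub_nonpos.2 h)))

lemma measurable_acceptProb (hf : Measurable f) (γ x : ℝ) : Measurable (acceptProb f γ x) := by
  unfold acceptProb
  fun_prop

lemma exp_neg_mul_mul_exp_sub_one_le (hγ : 1 ≤ γ) (d : ℝ) :
    Real.exp (-γ * d) * (Real.exp d - 1) ≤ 1 / γ := by
  have hbernoulli : 1 + γ * (Real.exp d - 1) ≤ Real.exp (γ * d) := by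
    have h := one_add_mul_self_le_rpow_one_add (s := Real.exp d - 1)
      (by linarith [Real.exp_pos d]) hγ
    rwa [add_sub_cancel, ← Real.exp_mul, mul_comm d] at h
  rw [neg_mul, Real.exp_neg, inv_mul_eq_div, div_le_div_iff₀ (Real.exp_pos _) (by linarith)]
  linarith

lemma acceptProb_mul_exp_sub_one_le (hγ : 1 ≤ γ) :
    acceptProb f γ x y * (Real.exp (f y - f x) - 1) ≤ 1 / γ := by
  rcases le_total (f y) (f x) with h | h
  · have hdown : Real.exp (f y - f x) - 1 ≤ 0 :=
      sub_nonpos.2 (Real.exp_le_one_iff.2 (sub_nonpos.2 h))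
    exact (mul_nonpos_of_nonneg_of_nonpos acceptProb_nonneg hdown).trans (by positivity)
  · have hup : 0 ≤ Real.exp (f y - f x) - 1 :=
      sub_nonneg.2 (Real.one_le_exp (sub_nonneg.2 h))
    exact (mul_le_mul_of_nonneg_right (min_le_right _ _) hup).trans
      (exp_neg_mul_mul_exp_sub_one_le hγ _)

lemma acceptProb_average_exp_le {δ : ℝ} (hγ : 1 ≤ γ) (hδ : 0 ≤ δ) :
    acceptProb f γ x y * Real.exp (f y) + (1 - acceptProb f γ x y) * Real.exp (f x) ≤
      Real.exp (f x) *
        (1 + 1 / γ - (1 - Real.exp (-δ)) * {y | f y ≤ f x - δ}.indicator 1 y) := by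
  have hfactor : acceptProb f γ x y * (Real.exp (f y - f x) - 1) ≤
      1 / γ - (1 - Real.exp (-δ)) * {y | f y ≤ f x - δ}.indicator 1 y := by
    by_cases hy : y ∈ {y | f y ≤ f x - δ}
    · have hdrop : f y ≤ f x - δ := hy
      have hexp : Real.exp (f y - f x) ≤ Real.exp (-δ) := Real.exp_le_exp.2 (by linarith)
      have hpos : 0 < 1 / γ := by positivity
      rw [acceptProb_eq_one (by linarith) (by linarith), indicator_of_mem hy, Pi.one_apply]
      linarith
    · rw [indicator_of_notMem hy, mul_zero, sub_zero]
      exact acceptProb_mul_exp_sub_one_le hγ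
  calc _ = Real.exp (f x) * (1 + acceptProb f γ x y * (Real.exp (f y - f x) - 1)) := by
        rw [Real.exp_sub]
        field_simp
        ring
    _ ≤ _ := mul_le_mul_of_nonneg_left (by linarith) (Real.exp_pos _).le

end AcceptProb

section Kernel

variable {f q : ℝ → ℝ} {γ x : ℝ}

lemma rwmKernel_const_mul {s : ℝ} (hs : s ≠ 0) :
    rwmKernel (fun y => s * f y) q (γ / s) x = rwmKernel f q γ x := by
  have hexponent (y : ℝ) : -(γ / s) * (s * f y - s * f x) = -γ * (f y - f x) := by
    field_simp
  simp only [rwmKernel, hexponent]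

instance instSFiniteRwmKernel (f q : ℝ → ℝ) (γ x : ℝ) : SFinite (rwmKernel f q γ x) := by
  unfold rwmKernel
  infer_instance

lemma lintegral_rwmKernel (hf : Measurable f) (hq0 : ∀ u, 0 ≤ q u) (hq : AEMeasurable q)
    {g : ℝ → ℝ} (hg : Measurable g) (hg0 : ∀ y, 0 ≤ g y) :
    ∫⁻ y, ENNReal.ofReal (g y) ∂(rwmKernel f q γ x) =
      ∫⁻ u, ENNReal.ofReal ((acceptProb f γ x (x + u) * g (x + u) +
        (1 - acceptProb f γ x (x + u)) * g x) * q u) := by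
  have hqx : AEMeasurable fun y => q (y - x) :=
    hq.comp_quasiMeasurePreserving (measurePreserving_sub_right volume x).quasiMeasurePreserving
  have hmeas : Measurable (acceptProb f γ x) := measurable_acceptProb hf γ x
  have hacc : AEMeasurable fun y => ENNReal.ofReal (acceptProb f γ x y * q (y - x)) :=
    (hmeas.aemeasurable.mul hqx).ennreal_ofReal
  have hrej : AEMeasurable fun y => ENNReal.ofReal ((1 - acceptProb f γ x y) * q (y - x)) :=
    ((hmeas.const_sub 1).aemeasurable.mul hqx).ennreal_ofReal
  have hacc0 (y : ℝ) : 0 ≤ acceptProb f γ x y * q (y - x) :=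
    mul_nonneg acceptProb_nonneg (hq0 _)
  have hrej0 (y : ℝ) : 0 ≤ (1 - acceptProb f γ x y) * q (y - x) :=
    mul_nonneg (sub_nonneg.2 acceptProb_le_one) (hq0 _)
  change ∫⁻ y, ENNReal.ofReal (g y)
    ∂(volume.withDensity (fun y => ENNReal.ofReal (acceptProb f γ x y * q (y - x))) +
      (∫⁻ y, ENNReal.ofReal ((1 - acceptProb f γ x y) * q (y - x))) • Measure.dirac x) = _
  rw [lintegral_add_measure, lintegral_smul_measure, lintegral_dirac' _ hg.ennreal_ofReal,
    lintegral_withDensity_eq_lintegral_mul₀ hacc hg.ennreal_ofReal.aemeasurable, smul_eq_mul,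
    ← lintegral_mul_const'' _ hrej,
    ← lintegral_add_left' (hacc.mul hg.ennreal_ofReal.aemeasurable),
    ← lintegral_add_left_eq_self _ x]
  refine lintegral_congr fun u => ?_
  simp only [Pi.mul_apply]
  rw [← ENNReal.ofReal_mul (hacc0 _), ← ENNReal.ofReal_mul (hrej0 _),
    ← ENNReal.ofReal_add (mul_nonneg (hacc0 _) (hg0 _)) (mul_nonneg (hrej0 _) (hg0 x)),
    add_sub_cancel_left]
  congr 1
  ring

lemma isProbabilityMeasure_rwmKernel (hf : Measurable f) (hq0 : ∀ u, 0 ≤ q u)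
    (hq1 : ∫ u, q u = 1) : IsProbabilityMeasure (rwmKernel f q γ x) := by
  have hqi := integrable_of_integral_eq_one hq1
  have hmass := lintegral_rwmKernel (γ := γ) (x := x) hf hq0 hqi.aemeasurable
    (measurable_const (a := (1 : ℝ))) fun _ => zero_le_one
  simp only [ENNReal.ofReal_one, lintegral_const, one_mul, mul_one, add_sub_cancel] at hmass
  rw [← ofReal_integral_eq_lintegral_ofReal hqi (ae_of_all _ hq0), hq1, ENNReal.ofReal_one] at hmass
  exact ⟨hmass⟩

/-- The probability that an increment with density `q` moves `x` to a point where `f` is lower by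
at least `δ`. -/
noncomputable def descentMass (f q : ℝ → ℝ) (δ x : ℝ) : ℝ :=
  ∫ u in {u | f (x + u) ≤ f x - δ}, q u

variable {δ : ℝ}

lemma descentMass_nonneg (hq0 : ∀ u, 0 ≤ q u) : 0 ≤ descentMass f q δ x :=
  integral_nonneg hq0

lemma setIntegral_le_descentMass (hq0 : ∀ u, 0 ≤ q u) (hqi : Integrable q) {J : Set ℝ}
    (hJ : ∀ u ∈ J, f (x + u) ≤ f x - δ) : ∫ u in J, q u ≤ descentMass f q δ x :=
  setIntegral_mono_set hqi.integrableOn (ae_of_all _ hq0) (LE.le.eventuallyLE hJ)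

lemma descentMass_le_one (hq0 : ∀ u, 0 ≤ q u) (hq1 : ∫ u, q u = 1) :
    descentMass f q δ x ≤ 1 :=
  hq1 ▸ setIntegral_le_integral (integrable_of_integral_eq_one hq1) (ae_of_all _ hq0)

lemma lintegral_rwmKernel_exp_le (hf : Measurable f) (hq0 : ∀ u, 0 ≤ q u) (hq1 : ∫ u, q u = 1)
    (hγ : 1 ≤ γ) (hδ : 0 ≤ δ) :
    ∫⁻ y, ENNReal.ofReal (Real.exp (f y)) ∂(rwmKernel f q γ x) ≤
      ENNReal.ofReal
        (Real.exp (f x) * (1 + 1 / γ - (1 - Real.exp (-δ)) * descentMass f q δ x)) := by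
  have hqi := integrable_of_integral_eq_one hq1
  set D := {u | f (x + u) ≤ f x - δ}
  have hD : MeasurableSet D := measurableSet_le (by fun_prop) measurable_const
  let F (u : ℝ) : ℝ :=
    Real.exp (f x) * ((1 + 1 / γ) * q u - (1 - Real.exp (-δ)) * D.indicator q u)
  have hFi : Integrable F :=
    ((hqi.const_mul _).sub ((hqi.indicator hD).const_mul _)).const_mul _
  have hFint : ∫ u, F u =
      Real.exp (f x) * (1 + 1 / γ - (1 - Real.exp (-δ)) * descentMass f q δ x) := by
    simp only [F]
    rw [integral_const_mul, integral_sub (hqi.const_mul _) ((hqi.indicator hD).const_mul _),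
      integral_const_mul, integral_const_mul, hq1, integral_indicator hD, mul_one, descentMass]
  have hle (u : ℝ) : (acceptProb f γ x (x + u) * Real.exp (f (x + u)) +
      (1 - acceptProb f γ x (x + u)) * Real.exp (f x)) * q u ≤ F u := by
    refine (mul_le_mul_of_nonneg_right (acceptProb_average_exp_le hγ hδ) (hq0 u)).trans_eq ?_
    change _ * (_ - _ * D.indicator 1 u) * q u = _
    by_cases hu : u ∈ D
    · simp only [F, indicator_of_mem hu, Pi.one_apply]
      ring
    · simp only [F, indicator_of_notMem hu]
      ring
  have hF0 (u : ℝ) : 0 ≤ F u :=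
    (hle u).trans' <| mul_nonneg (add_nonneg (mul_nonneg acceptProb_nonneg (Real.exp_pos _).le)
      (mul_nonneg (sub_nonneg.2 acceptProb_le_one) (Real.exp_pos _).le)) (hq0 u)
  rw [lintegral_rwmKernel hf hq0 hqi.aemeasurable (by fun_prop) (fun y => (Real.exp_pos _).le),
    ← hFint, ofReal_integral_eq_lintegral_ofReal hFi (ae_of_all _ hF0)]
  exact lintegral_mono fun u => ENNReal.ofReal_le_ofReal (hle u)

lemma exists_geometricDrift_of_le_descentMass (hf : Continuous f) (hq0 : ∀ u, 0 ≤ q u)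
    (hq1 : ∫ u, q u = 1) {m : ℝ} (hδ : 0 < δ) (hm : 0 < m)
    (hfar : ∀ᶠ x in cocompact ℝ, m ≤ descentMass f q δ x) :
    ∃ lam₀ c₀ b γbar : ℝ, 0 ≤ lam₀ ∧ lam₀ < 1 ∧ 0 ≤ b ∧ 0 < γbar ∧ ∀ γ, γbar ≤ γ →
      GeometricDrift (rwmKernel f q γ) (fun x => Real.exp (f x)) lam₀ b
        {x | Real.exp (f x) ≤ c₀} := by
  have hm1 : m ≤ 1 := hfar.exists.elim fun x hx => hx.trans (descentMass_le_one hq0 hq1)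
  obtain ⟨t, ht, hfar_t⟩ := mem_cocompact'.1 hfar
  obtain ⟨M, hM⟩ := ht.bddAbove_image hf.continuousOn
  set κ := 1 - Real.exp (-δ)
  have hκ0 : 0 < κ := sub_pos.2 (Real.exp_lt_one_iff.2 (neg_lt_zero.2 hδ))
  have hκ1 : κ ≤ 1 := sub_le_self _ (Real.exp_pos _).le
  set η := κ * m
  have hη0 : 0 < η := mul_pos hκ0 hm
  have hη1 : η ≤ 1 := mul_le_one₀ hκ1 hm.le hm1
  refine ⟨1 - η / 2, Real.exp M, Real.exp M, 2 / η, by linarith, by linarith,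
    (Real.exp_pos M).le, by positivity, fun γ hγ x => ?_⟩
  have hγ1 : 1 ≤ γ := hγ.trans' ((one_le_div hη0).2 (by linarith))
  have hγη : 1 / γ ≤ η / 2 := by
    simpa only [one_div_div] using one_div_le_one_div_of_le (by positivity) hγ
  refine (lintegral_rwmKernel_exp_le hf.measurable hq0 hq1 hγ1 hδ.le).trans
    (ENNReal.ofReal_le_ofReal ?_)
  have hV := Real.exp_pos (f x)
  by_cases hx : x ∈ {x | Real.exp (f x) ≤ Real.exp M}
  · have hgain : 0 ≤ κ * descentMass f q δ x := mul_nonneg hκ0.le (descentMass_nonneg hq0)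
    have hVM : Real.exp (f x) ≤ Real.exp M := hx
    rw [indicator_of_mem hx]
    nlinarith
  · have hgain : η ≤ κ * descentMass f q δ x := by
      refine mul_le_mul_of_nonneg_left (by_contra fun hxm => hx ?_) hκ0.le
      exact Real.exp_le_exp.2 (hM (mem_image_of_mem f (hfar_t hxm)))
    rw [indicator_of_notMem hx]
    nlinarith

end Kernel

section LinearGrowth

variable {f q : ℝ → ℝ} {α x₁ : ℝ}

lemma setIntegral_Icc_pos (hq : ∀ u, 0 < q u) (hqi : Integrable q) {a b : ℝ} (hab : a < b) :
    0 < ∫ u in Icc a b, q u := by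
  rw [setIntegral_pos_iff_support_of_nonneg_ae (ae_of_all _ fun u => (hq u).le) hqi.integrableOn,
    Function.support_eq_univ fun u => (hq u).ne', univ_inter, Real.volume_Icc]
  exact ENNReal.ofReal_pos.2 (sub_pos.2 hab)

lemma HasLinearGrowth.exists_le_descentMass (h : HasLinearGrowth f α x₁) (hα : 0 ≤ α)
    (hq : ∀ u, 0 < q u) (hqi : Integrable q) :
    ∃ m > 0, ∀ᶠ x in cocompact ℝ, m ≤ descentMass f q α x := by
  have hq0 (u : ℝ) : 0 ≤ q u := (hq u).le
  -- far out, inward increments of length between `1` and `2` lower `f` by at least `α`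
  refine ⟨min (∫ u in Icc 1 2, q u) (∫ u in Icc (-2) (-1), q u),
    lt_min (setIntegral_Icc_pos hq hqi (by norm_num)) (setIntegral_Icc_pos hq hqi (by norm_num)),
    ?_⟩
  rw [cocompact_eq_atBot_atTop, eventually_sup]
  constructor
  · filter_upwards [eventually_le_atBot (-x₁ - 2)] with x hx
    refine (min_le_left _ _).trans (setIntegral_le_descentMass hq0 hqi fun u ⟨hu1, hu2⟩ => ?_)
    nlinarith [h.left (x + u) x (by linarith) (by linarith)]
  · filter_upwards [eventually_ge_atTop (x₁ + 2)] with x hx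
    refine (min_le_right _ _).trans (setIntegral_le_descentMass hq0 hqi fun u ⟨hu1, hu2⟩ => ?_)
    nlinarith [h.right (x + u) x (by linarith) (by linarith)]

lemma HasLinearGrowth.exists_geometricDrift_rwmKernel (h : HasLinearGrowth f α x₁) (hα : 0 < α)
    (hf : Continuous f) (hq : ∀ u, 0 < q u) (hq1 : ∫ u, q u = 1) {s : ℝ} (hs : 0 < s) :
    ∃ lam₀ c₀ b γbar : ℝ, 0 ≤ lam₀ ∧ lam₀ < 1 ∧ 0 ≤ b ∧ 0 < γbar ∧ ∀ γ, γbar ≤ γ →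
      GeometricDrift (rwmKernel f q γ) (fun x => Real.exp (s * f x)) lam₀ b
        {x | Real.exp (s * f x) ≤ c₀} := by
  have hsα : 0 < s * α := mul_pos hs hα
  obtain ⟨m, hm, hfar⟩ := (h.const_mul hs.le).exists_le_descentMass hsα.le hq
    (integrable_of_integral_eq_one hq1)
  obtain ⟨lam₀, c₀, b, γbar, h0, h1, hb, hγbar, hdrift⟩ :=
    exists_geometricDrift_of_le_descentMass (hf.const_mul s) (fun u => (hq u).le) hq1 hsα hm hfar
  refine ⟨lam₀, c₀, b, γbar * s, h0, h1, hb, mul_pos hγbar hs, fun γ hγ x => ?_⟩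
  simpa only [rwmKernel_const_mul hs.ne'] using hdrift (γ / s) ((le_div_iff₀ hs).2 hγ) x

end LinearGrowth

theorem rwm_uniform_drift_general {f q : ℝ → ℝ} {α x₁ s : ℝ} (hf : Continuous f) (hα : 0 < α)
    (hgrow : HasLinearGrowth f α x₁) (hq : ∀ u, 0 < q u) (hq1 : ∫ u, q u = 1) (hs : 0 < s) :
    (∀ c : ℝ, IsCompact {x | Real.exp (s * f x) ≤ c}) ∧
    ∃ lam₀ lam c₀ c b γbar : ℝ,
      0 ≤ lam₀ ∧ lam₀ < lam ∧ lam < 1 ∧ c₀ ≤ c ∧ 0 < γbar ∧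
      ∀ γ, γbar ≤ γ →
        GeometricDrift (rwmKernel f q γ) (fun x => Real.exp (s * f x)) lam₀ b
          {x | Real.exp (s * f x) ≤ c₀} ∧
        GeometricDrift (fun p : ℝ × ℝ => (rwmKernel f q γ p.1).prod (rwmKernel f q γ p.2))
          (fun p => (Real.exp (s * f p.1) + Real.exp (s * f p.2)) / 2) lam b
          ({x | Real.exp (s * f x) ≤ c} ×ˢ {x | Real.exp (s * f x) ≤ c}) := by
  refine ⟨(hgrow.const_mul hs.le).isCompact_setOf_exp_le (mul_pos hs hα) (hf.const_mul s), ?_⟩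
  obtain ⟨lam₀, c₀, b, γbar, h0, h1, hb, hγbar, hdrift⟩ :=
    hgrow.exists_geometricDrift_rwmKernel hα hf hq hq1 hs
  obtain ⟨lam, hlam₀, hlam1⟩ := exists_between h1
  have hgap : 0 < lam - lam₀ := sub_pos.2 hlam₀
  refine ⟨lam₀, lam, c₀, max c₀ (2 * b / (lam - lam₀)), b, γbar, h0, hlam₀, hlam1,
    le_max_left _ _, hγbar, fun γ hγ => ⟨hdrift γ hγ, ?_⟩⟩
  have (x : ℝ) : IsProbabilityMeasure (rwmKernel f q γ x) :=
    isProbabilityMeasure_rwmKernel hf.measurable (fun u => (hq u).le) hq1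
  exact (hdrift γ hγ).prod (by fun_prop) (fun x => (Real.exp_pos _).le) h0 hlam₀.le hb
    ((div_le_iff₀' hgap).1 (le_max_right _ _))

/-- Proposition 11: the level sets of `V_s = e^{sf}` are compact, and there are a common small
set, drift function and constants such that for every large enough inverse temperature `γ` the
kernels `K_γ` (univariate drift) and `K̄_γ = K_γ ⊗ K_γ` (bivariate drift, with
`V̄_s(x,x') = (V_s(x) + V_s(x'))/2`) satisfy geometric drift conditions. -/
theorem rwm_uniform_drift
    (f q : ℝ → ℝ)
    -- (SA0)
    (hf : ContDiff ℝ 2 f) (α x₁ : ℝ) (hα : 0 < α)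
    (hgrow1 : ∀ x y : ℝ, x₁ ≤ x → x ≤ y → α * (y - x) ≤ f y - f x)
    (hgrow2 : ∀ x y : ℝ, x ≤ -x₁ → y ≤ x → α * (x - y) ≤ f y - f x)
    -- (SA1)
    (hSA1 : ∀ x : ℝ, (∀ y, f x ≤ f y) → 0 < deriv (deriv f) x)
    -- (SA2)
    (hqc : Continuous q) (hqpos : ∀ y, 0 < q y) (hqsym : ∀ y, q (-y) = q y)
    (hqint : ∫ y, q y = 1) :
    -- the level sets of V_s are compact
    (∀ s c : ℝ, 0 < s → 1 ≤ c → IsCompact {x : ℝ | Real.exp (s * f x) ≤ c}) ∧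
    -- uniform-in-γ univariate and bivariate drift conditions
    ∃ lam₀ lam s c₀ c b γbar : ℝ,
      0 ≤ lam₀ ∧ lam₀ < lam ∧ lam < 1 ∧ 0 < s ∧ c₀ ≤ c ∧ 0 < γbar ∧
      ∀ γ : ℝ, γbar ≤ γ →
        -- (39): K_γ V_s ≤ λ₀ V_s + b 1_{V_s ≤ c₀}
        (∀ x : ℝ, ∫⁻ y, ENNReal.ofReal (Real.exp (s * f y)) ∂(rwmKernel f q γ x) ≤
          ENNReal.ofReal (lam₀ * Real.exp (s * f x) +
            Set.indicator {x' : ℝ | Real.exp (s * f x') ≤ c₀} (fun _ => b) x)) ∧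
        -- (40): K̄_γ V̄_s ≤ λ V̄_s + b 1_{{V_s ≤ c} × {V_s ≤ c}}
        (∀ p : ℝ × ℝ,
          ∫⁻ z, (∫⁻ z', ENNReal.ofReal ((Real.exp (s * f z) + Real.exp (s * f z')) / 2)
              ∂(rwmKernel f q γ p.2)) ∂(rwmKernel f q γ p.1) ≤
            ENNReal.ofReal (lam * ((Real.exp (s * f p.1) + Real.exp (s * f p.2)) / 2) +
              Set.indicator
                ({x' : ℝ | Real.exp (s * f x') ≤ c} ×ˢ {x' : ℝ | Real.exp (s * f x') ≤ c})
                (fun _ => b) p)) := by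
  have hfc : Continuous f := hf.continuous
  have hgeneral {s : ℝ} (hs : 0 < s) :=
    rwm_uniform_drift_general hfc hα ⟨hgrow1, hgrow2⟩ hqpos hqint hs
  obtain ⟨lam₀, lam, c₀, c, b, γbar, h₀, hlt, h₁, hc, hγbar, hdrift⟩ := (hgeneral one_pos).2
  exact ⟨fun s c hs _ => (hgeneral hs).1 c, lam₀, lam, 1, c₀, c, b, γbar, h₀, hlt, h₁, one_pos,
    hc, hγbar, fun γ hγ => ⟨(hdrift γ hγ).1, fun p =>
      (lintegral_prod _ (by fun_prop)).ge.trans ((hdrift γ hγ).2 p)⟩⟩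
end

section
/- Let h be a nonnegative measurable function on a measure space (X, B(X), μ) such that 0 < ∫ h^γ dμ < ∞ for all γ > γ_0 > 0 and 0 < ‖h‖_∞ := ess sup h < ∞. For γ ≥ γ_0, let μ_γ be the probability measure with density h^γ / ∫ h^γ dμ with respect to μ, and set Z(γ) := (∫ h^γ dμ) / ‖h‖_∞^γ. Then for all γ' ≥ γ ≥ γ_0, ‖μ_γ − μ_{γ'}‖_TV ≤ 2 log(Z(γ)/Z(γ')). -/
open MeasureTheory
open scoped ENNReal

/-- The total variation distance `‖μ - ν‖_TV = sup_{|φ| ≤ 1} |μ(φ) - ν(φ)|`. -/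
noncomputable def tvDist {X : Type*} [MeasurableSpace X] (μ ν : Measure X) : ℝ≥0∞ :=
  ⨆ (φ : X → ℝ) (_ : Measurable φ) (_ : ∀ x, |φ x| ≤ 1) (_ : Integrable φ μ)
    (_ : Integrable φ ν), ENNReal.ofReal |∫ x, φ x ∂μ - ∫ x, φ x ∂ν|

/-!
Let `M` be a bound for `h`. Since `h / M ≤ 1`, raising the exponent decreases `(h / M) ^ γ`, so
after normalization the measure `Q` with exponent `γ'` is at most `s` times the measure `P` with
exponent `γ`, where `s = Z(γ) / Z(γ')`. Probability measures with `Q ≤ s • P` share at least the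
fraction `s⁻¹` of their mass, so their distance is at most `2 (1 - s⁻¹) ≤ 2 log s`.
-/

section TotalVariation

variable {X : Type*} [MeasurableSpace X] {P Q : Measure X}

lemma tvDist_le_ofReal_of_forall_integral_sub_le {r : ℝ}
    (hr : ∀ φ : X → ℝ, Measurable φ → (∀ x, |φ x| ≤ 1) → Integrable φ P → Integrable φ Q →
      ∫ x, φ x ∂P - ∫ x, φ x ∂Q ≤ r) :
    tvDist P Q ≤ ENNReal.ofReal r := by
  refine iSup_le fun φ => iSup_le fun hφ => iSup_le fun hφ1 => iSup_le fun hφP =>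
    iSup_le fun hφQ => ENNReal.ofReal_le_ofReal ?_
  have hneg := hr (fun x => -φ x) hφ.neg (by simpa only [abs_neg] using hφ1) hφP.neg hφQ.neg
  rw [integral_neg, integral_neg] at hneg
  exact abs_le.2 ⟨by linarith, hr φ hφ hφ1 hφP hφQ⟩

variable [IsProbabilityMeasure P] [IsProbabilityMeasure Q] {s : ℝ≥0∞}

lemma one_le_of_le_smul (hle : Q ≤ s • P) : 1 ≤ s := by
  simpa using hle Set.univ

lemma integral_sub_integral_le_of_le_smul (hs : s ≠ ⊤) (hle : Q ≤ s • P) {φ : X → ℝ}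
    (hφ : ∀ x, |φ x| ≤ 1) (hP : Integrable φ P) (hQ : Integrable φ Q) :
    ∫ x, φ x ∂P - ∫ x, φ x ∂Q ≤ 2 * (1 - s.toReal⁻¹) := by
  have hs1 : 1 ≤ s.toReal := by
    simpa using ENNReal.toReal_mono hs (one_le_of_le_smul hle)
  have hdom : 1 - ∫ x, φ x ∂Q ≤ s.toReal * (1 - ∫ x, φ x ∂P) := by
    have hmono : ∫ x, (1 - φ x) ∂Q ≤ ∫ x, (1 - φ x) ∂(s • P) :=
      integral_mono_measure hle (.of_forall fun x => sub_nonneg.2 (abs_le.1 (hφ x)).2)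
        (((integrable_const 1).sub hP).smul_measure hs)
    rw [integral_smul_measure, integral_sub (integrable_const 1) hP,
      integral_sub (integrable_const 1) hQ] at hmono
    simpa only [integral_const, probReal_univ, smul_eq_mul, mul_one] using hmono
  have hlower : -1 ≤ ∫ x, φ x ∂Q := by
    simpa using integral_mono (integrable_const (-1 : ℝ)) hQ fun x => (abs_le.1 (hφ x)).1
  calc ∫ x, φ x ∂P - ∫ x, φ x ∂Q
      = (1 - ∫ x, φ x ∂Q) - (1 - ∫ x, φ x ∂P) := by ring
    _ ≤ (1 - ∫ x, φ x ∂Q) - s.toReal⁻¹ * (1 - ∫ x, φ x ∂Q) := by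
        gcongr
        exact (inv_mul_le_iff₀ (by positivity)).2 hdom
    _ = (1 - ∫ x, φ x ∂Q) * (1 - s.toReal⁻¹) := by ring
    _ ≤ 2 * (1 - s.toReal⁻¹) := by
        gcongr
        · exact sub_nonneg.2 (inv_le_one_of_one_le₀ hs1)
        · linarith

lemma tvDist_le_two_mul_log_of_le_smul (hs : s ≠ ⊤) (hle : Q ≤ s • P) :
    tvDist P Q ≤ ENNReal.ofReal (2 * Real.log s.toReal) := by
  refine tvDist_le_ofReal_of_forall_integral_sub_le fun φ _ hφ hP hQ =>
    (integral_sub_integral_le_of_le_smul hs hle hφ hP hQ).trans ?_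
  have hs0 : s ≠ 0 := (one_pos.trans_le (one_le_of_le_smul hle)).ne'
  gcongr
  exact Real.one_sub_inv_le_log_of_pos (ENNReal.toReal_pos hs0 hs)

end TotalVariation

section NormalizedDensity

variable {X : Type*} [MeasurableSpace X] {μ : Measure X} {f g : X → ℝ≥0∞} {c : ℝ≥0∞}

/-- The measure with density `f / ∫ f dμ` with respect to `μ`; the tempered measure `μ_γ` is the
case `f = h ^ γ`. It is a probability measure only if `0 < ∫ f dμ < ∞`. -/
noncomputable def normalizedDensity (μ : Measure X) (f : X → ℝ≥0∞) : Measure X :=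
  μ.withDensity fun x => f x / ∫⁻ y, f y ∂μ

lemma normalizedDensity_eq_smul (h0 : ∫⁻ x, f x ∂μ ≠ 0) :
    normalizedDensity μ f = (∫⁻ x, f x ∂μ)⁻¹ • μ.withDensity f := by
  rw [← withDensity_smul' _ _ (ENNReal.inv_ne_top.2 h0)]
  simp only [normalizedDensity, div_eq_mul_inv, Pi.smul_def, smul_eq_mul, mul_comm]

lemma isProbabilityMeasure_normalizedDensity (h0 : ∫⁻ x, f x ∂μ ≠ 0) (htop : ∫⁻ x, f x ∂μ ≠ ⊤) :
    IsProbabilityMeasure (normalizedDensity μ f) where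
  measure_univ := by
    rw [normalizedDensity_eq_smul h0, Measure.smul_apply, withDensity_apply _ .univ,
      Measure.restrict_univ, smul_eq_mul, ENNReal.inv_mul_cancel h0 htop]

lemma lintegral_le_const_mul_lintegral (hc : c ≠ ⊤) (hle : ∀ᵐ x ∂μ, g x ≤ c * f x) :
    ∫⁻ x, g x ∂μ ≤ c * ∫⁻ x, f x ∂μ :=
  (lintegral_mono_ae hle).trans_eq (lintegral_const_mul' c f hc)

lemma normalizedDensity_le_smul (hc : c ≠ ⊤) (hle : ∀ᵐ x ∂μ, g x ≤ c * f x)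
    (hf0 : ∫⁻ x, f x ∂μ ≠ 0) (hf : ∫⁻ x, f x ∂μ ≠ ⊤) (hg0 : ∫⁻ x, g x ∂μ ≠ 0) :
    normalizedDensity μ g ≤ (c * (∫⁻ x, f x ∂μ) / ∫⁻ x, g x ∂μ) • normalizedDensity μ f := by
  have hdens : μ.withDensity g ≤ c • μ.withDensity f :=
    (withDensity_mono hle).trans_eq (withDensity_smul' c f hc)
  rw [normalizedDensity_eq_smul hf0, normalizedDensity_eq_smul hg0, smul_smul]
  set a := ∫⁻ x, f x ∂μ
  set b := ∫⁻ x, g x ∂μ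
  have hconst : c * a / b * a⁻¹ = b⁻¹ * c := by
    calc c * a / b * a⁻¹ = b⁻¹ * c * (a * a⁻¹) := by rw [div_eq_mul_inv]; ring
      _ = b⁻¹ * c := by rw [ENNReal.mul_inv_cancel hf0 hf, mul_one]
  rw [hconst, ← smul_smul]
  gcongr

lemma tvDist_normalizedDensity_le (hc : c ≠ ⊤) (hle : ∀ᵐ x ∂μ, g x ≤ c * f x)
    (hf : ∫⁻ x, f x ∂μ ≠ ⊤) (hg0 : ∫⁻ x, g x ∂μ ≠ 0) :
    tvDist (normalizedDensity μ f) (normalizedDensity μ g) ≤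
      ENNReal.ofReal (2 * Real.log (c * (∫⁻ x, f x ∂μ) / ∫⁻ x, g x ∂μ).toReal) := by
  have hgf := lintegral_le_const_mul_lintegral hc hle
  have hf0 : ∫⁻ x, f x ∂μ ≠ 0 := fun hf0 =>
    hg0 (le_zero_iff.1 (hgf.trans_eq (by rw [hf0, mul_zero])))
  have hg : ∫⁻ x, g x ∂μ ≠ ⊤ := ne_top_of_le_ne_top (ENNReal.mul_ne_top hc hf) hgf
  have := isProbabilityMeasure_normalizedDensity hf0 hf
  have := isProbabilityMeasure_normalizedDensity hg0 hg
  exact tvDist_le_two_mul_log_of_le_smul (ENNReal.div_ne_top (ENNReal.mul_ne_top hc hf) hg0)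
    (normalizedDensity_le_smul hc hle hf0 hf hg0)

end NormalizedDensity

section Tempering

variable {M : ℝ≥0∞} {γ γ' : ℝ}

lemma rpow_le_rpow_sub_mul_rpow (hM0 : M ≠ 0) (hM : M ≠ ⊤) (hγ : γ ≤ γ') {y : ℝ≥0∞}
    (hy : y ≤ M) : y ^ γ' ≤ M ^ (γ' - γ) * y ^ γ := by
  have hsub : 0 ≤ γ' - γ := sub_nonneg.2 hγ
  rcases eq_or_ne y 0 with rfl | hy0
  · rcases lt_trichotomy γ 0 with hneg | rfl | hpos
    · rw [ENNReal.zero_rpow_of_neg hneg, ENNReal.mul_top (ENNReal.rpow_pos hM0.bot_lt hM).ne']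
      exact le_top
    · simpa using ENNReal.rpow_le_rpow hy hγ
    · simp [ENNReal.zero_rpow_of_pos (hpos.trans_le hγ)]
  · calc y ^ γ' = y ^ (γ' - γ) * y ^ γ := by
          rw [← ENNReal.rpow_add _ _ hy0 (ne_top_of_le_ne_top hM hy), sub_add_cancel]
      _ ≤ M ^ (γ' - γ) * y ^ γ := by gcongr

lemma div_rpow_div_div_rpow (hM0 : M ≠ 0) (hM : M ≠ ⊤) (a b : ℝ≥0∞) :
    a / M ^ γ / (b / M ^ γ') = M ^ (γ' - γ) * a / b := by
  have hp0 : M ^ γ' ≠ 0 := (ENNReal.rpow_pos hM0.bot_lt hM).ne'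
  have hp : M ^ γ' ≠ ⊤ := ENNReal.rpow_ne_top_of_ne_zero hM0 hM
  rw [ENNReal.rpow_sub _ _ hM0 hM, div_eq_mul_inv _ (b / M ^ γ'),
    ENNReal.inv_div (.inl hp) (.inl hp0)]
  simp only [div_eq_mul_inv]
  ring

theorem tv_bound_tempered_measures_general {X : Type*} [MeasurableSpace X] {μ : Measure X}
    {h : X → ℝ≥0∞} (hM0 : M ≠ 0) (hM : M ≠ ⊤) (hle : ∀ᵐ x ∂μ, h x ≤ M) (hγ : γ ≤ γ')
    (hint : ∫⁻ x, h x ^ γ ∂μ ≠ ⊤) (hint' : ∫⁻ x, h x ^ γ' ∂μ ≠ 0) :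
    tvDist (μ.withDensity (fun x => h x ^ γ / ∫⁻ y, h y ^ γ ∂μ))
        (μ.withDensity (fun x => h x ^ γ' / ∫⁻ y, h y ^ γ' ∂μ)) ≤
      ENNReal.ofReal (2 * Real.log
        ((((∫⁻ x, h x ^ γ ∂μ) / M ^ γ) / ((∫⁻ x, h x ^ γ' ∂μ) / M ^ γ')).toReal)) := by
  rw [div_rpow_div_div_rpow hM0 hM]
  have hpow : ∀ᵐ x ∂μ, h x ^ γ' ≤ M ^ (γ' - γ) * h x ^ γ :=
    hle.mono fun x hx => rpow_le_rpow_sub_mul_rpow hM0 hM hγ hx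
  exact tvDist_normalizedDensity_le (ENNReal.rpow_ne_top_of_ne_zero hM0 hM) hpow hint hint'

end Tempering

/-- Lemma A.1: for `μ_γ ∝ h^γ dμ` and `Z(γ) = (∫ h^γ dμ)/‖h‖_∞^γ`, one has
`‖μ_γ - μ_{γ'}‖_TV ≤ 2 log(Z(γ)/Z(γ'))` for `γ' ≥ γ ≥ γ₀`. -/
theorem tv_bound_tempered_measures
    {X : Type*} [MeasurableSpace X] (μ : Measure X)
    (h : X → ℝ≥0∞) (hm : Measurable h)
    (γ₀ : ℝ) (hγ₀ : 0 < γ₀)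
    (hint : ∀ γ : ℝ, γ₀ ≤ γ → 0 < ∫⁻ x, h x ^ γ ∂μ ∧ ∫⁻ x, h x ^ γ ∂μ < ⊤)
    (hess0 : 0 < essSup h μ) (hessT : essSup h μ < ⊤) :
    ∀ γ γ' : ℝ, γ₀ ≤ γ → γ ≤ γ' →
      tvDist (μ.withDensity (fun x => h x ^ γ / ∫⁻ y, h y ^ γ ∂μ))
          (μ.withDensity (fun x => h x ^ γ' / ∫⁻ y, h y ^ γ' ∂μ)) ≤
        ENNReal.ofReal (2 * Real.log
          ((((∫⁻ x, h x ^ γ ∂μ) / essSup h μ ^ γ) /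
            ((∫⁻ x, h x ^ γ' ∂μ) / essSup h μ ^ γ')).toReal)) :=
  fun _ _ hγ hγ' => tv_bound_tempered_measures_general hess0.ne' hessT.ne
    (ENNReal.ae_le_essSup h) hγ' (hint _ hγ).2.ne (hint _ (hγ.trans hγ')).1.ne'
end

section
/- Let f and g be two probability density functions with respect to a common dominating measure μ on (X, B(X)). Assume ‖f‖_∞ < ∞, ‖g‖_∞ < ∞, and f(x)/‖f‖_∞ ≥ g(x)/‖g‖_∞ for μ-almost every x. Then ∫ |f − g| dμ ≤ 2 log(‖g‖_∞ / ‖f‖_∞). -/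
/-!
Put `c = ‖f‖_∞ / ‖g‖_∞`. The hypothesis says that `c * g ≤ f` almost everywhere, and comparing
integrals gives `c ≤ 1`; hence `c * g ≤ min f g`. Since `|f - g| + 2 * min f g = f + g`, the
distance `∫ |f - g|` is at most `2 * (1 - c)`, and `1 - c ≤ -log c`.
-/

open MeasureTheory
open scoped ENNReal

section

variable {X : Type*} [MeasurableSpace X] {μ : Measure X} {f g : X → ℝ≥0∞} {c : ℝ≥0∞}

theorem one_sub_inv_le_ofReal_log {r : ℝ≥0∞} (hr : r ≠ ∞) :
    1 - r⁻¹ ≤ ENNReal.ofReal (Real.log r.toReal) := by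
  obtain rfl | hr0 := eq_or_ne r 0
  · simp
  calc 1 - r⁻¹ = ENNReal.ofReal (1 - r.toReal⁻¹) := by
        rw [ENNReal.ofReal_sub _ (by positivity), ENNReal.ofReal_one, ← ENNReal.toReal_inv,
          ENNReal.ofReal_toReal (ENNReal.inv_ne_top.2 hr0)]
    _ ≤ ENNReal.ofReal (Real.log r.toReal) :=
        ENNReal.ofReal_le_ofReal (Real.one_sub_inv_le_log_of_pos (ENNReal.toReal_pos hr0 hr))

theorem essSup_ne_zero_of_lintegral_ne_zero (hf : ∫⁻ x, f x ∂μ ≠ 0) : essSup f μ ≠ 0 :=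
  fun h => hf (lintegral_eq_zero_of_ae_eq_zero (ENNReal.essSup_eq_zero_iff.1 h))

theorem ae_essSup_div_mul_le
    (hord : ∀ᵐ x ∂μ, g x / essSup g μ ≤ f x / essSup f μ) :
    ∀ᵐ x ∂μ, essSup f μ / essSup g μ * g x ≤ f x := by
  filter_upwards [hord] with x hx
  calc essSup f μ / essSup g μ * g x = essSup f μ * (g x / essSup g μ) :=
        ENNReal.mul_comm_div
    _ ≤ essSup f μ * (f x / essSup f μ) := by gcongr
    _ ≤ f x := ENNReal.mul_div_le

theorem mul_lintegral_le_of_ae_mul_le (hcg : ∀ᵐ x ∂μ, c * g x ≤ f x) :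
    c * ∫⁻ x, g x ∂μ ≤ ∫⁻ x, f x ∂μ :=
  (lintegral_const_mul_le c g).trans (lintegral_mono_ae hcg)

theorem le_one_of_ae_mul_le (hfg : ∫⁻ x, f x ∂μ ≤ ∫⁻ x, g x ∂μ)
    (hg0 : ∫⁻ x, g x ∂μ ≠ 0) (hg : ∫⁻ x, g x ∂μ ≠ ∞)
    (hcg : ∀ᵐ x ∂μ, c * g x ≤ f x) : c ≤ 1 := by
  rw [← ENNReal.mul_le_mul_iff_left hg0 hg, one_mul]
  exact (mul_lintegral_le_of_ae_mul_le hcg).trans hfg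

-- An inequality because `∫⁻` is only superadditive when `g` is not measurable.
theorem lintegral_max_sub_min_add_two_mul_lintegral_min_le (hf : AEMeasurable f μ) :
    ∫⁻ x, (max (f x) (g x) - min (f x) (g x)) ∂μ + 2 * ∫⁻ x, min (f x) (g x) ∂μ ≤
      ∫⁻ x, f x ∂μ + ∫⁻ x, g x ∂μ :=
  calc ∫⁻ x, (max (f x) (g x) - min (f x) (g x)) ∂μ + 2 * ∫⁻ x, min (f x) (g x) ∂μ
      = ∫⁻ x, (max (f x) (g x) - min (f x) (g x)) ∂μ + ∫⁻ x, min (f x) (g x) ∂μ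
          + ∫⁻ x, min (f x) (g x) ∂μ := by rw [two_mul, add_assoc]
    _ ≤ ∫⁻ x, (max (f x) (g x) - min (f x) (g x) + min (f x) (g x)) ∂μ
          + ∫⁻ x, min (f x) (g x) ∂μ := by gcongr; exact le_lintegral_add _ _
    _ = ∫⁻ x, max (f x) (g x) ∂μ + ∫⁻ x, min (f x) (g x) ∂μ := by
        simp only [tsub_add_cancel_of_le min_le_max]
    _ ≤ ∫⁻ x, (max (f x) (g x) + min (f x) (g x)) ∂μ := le_lintegral_add _ _
    _ = ∫⁻ x, f x ∂μ + ∫⁻ x, g x ∂μ := by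
        simp only [max_add_min]
        exact lintegral_add_left' hf _

theorem lintegral_max_sub_min_le_of_ae_mul_le (hf : AEMeasurable f μ)
    (hfg : ∫⁻ x, f x ∂μ ≤ ∫⁻ x, g x ∂μ) (hg : ∫⁻ x, g x ∂μ ≠ ∞) (hc : c ≤ 1)
    (hcg : ∀ᵐ x ∂μ, c * g x ≤ f x) :
    ∫⁻ x, (max (f x) (g x) - min (f x) (g x)) ∂μ ≤ 2 * (1 - c) * ∫⁻ x, g x ∂μ := by
  have hmin : c * ∫⁻ x, g x ∂μ ≤ ∫⁻ x, min (f x) (g x) ∂μ :=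
    mul_lintegral_le_of_ae_mul_le <|
      hcg.mono fun x hx => le_min hx (mul_le_of_le_one_left' hc)
  have hcg_top : 2 * (c * ∫⁻ x, g x ∂μ) ≠ ∞ :=
    ENNReal.mul_ne_top ENNReal.ofNat_ne_top
      (ENNReal.mul_ne_top (ne_top_of_le_ne_top ENNReal.one_ne_top hc) hg)
  calc ∫⁻ x, (max (f x) (g x) - min (f x) (g x)) ∂μ
      ≤ 2 * ∫⁻ x, g x ∂μ - 2 * (c * ∫⁻ x, g x ∂μ) := by
        refine ENNReal.le_sub_of_add_le_right hcg_top ?_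
        calc ∫⁻ x, (max (f x) (g x) - min (f x) (g x)) ∂μ + 2 * (c * ∫⁻ x, g x ∂μ)
            ≤ ∫⁻ x, (max (f x) (g x) - min (f x) (g x)) ∂μ
                + 2 * ∫⁻ x, min (f x) (g x) ∂μ := by gcongr
          _ ≤ ∫⁻ x, f x ∂μ + ∫⁻ x, g x ∂μ :=
              lintegral_max_sub_min_add_two_mul_lintegral_min_le hf
          _ ≤ 2 * ∫⁻ x, g x ∂μ := by rw [two_mul]; gcongr
    _ = 2 * (1 - c) * ∫⁻ x, g x ∂μ := by
        rw [mul_assoc, ENNReal.sub_mul fun _ _ => hg, one_mul,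
          ENNReal.mul_sub fun _ _ => ENNReal.ofNat_ne_top]

theorem l1_bound_ordered_densities_general (hf : AEMeasurable f μ)
    (hfg : ∫⁻ x, f x ∂μ = ∫⁻ x, g x ∂μ) (hg : ∫⁻ x, g x ∂μ ≠ ∞) (hgT : essSup g μ ≠ ∞)
    (hord : ∀ᵐ x ∂μ, g x / essSup g μ ≤ f x / essSup f μ) :
    ∫⁻ x, (max (f x) (g x) - min (f x) (g x)) ∂μ ≤
      ENNReal.ofReal (2 * Real.log ((essSup g μ / essSup f μ).toReal)) * ∫⁻ x, g x ∂μ := by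
  have hcg := ae_essSup_div_mul_le hord
  obtain hg0 | hg0 := eq_or_ne (∫⁻ x, g x ∂μ) 0
  · simpa only [hg0, mul_zero] using
      lintegral_max_sub_min_le_of_ae_mul_le hf hfg.le hg zero_le_one (c := 0) (by simp)
  have hF0 : essSup f μ ≠ 0 := essSup_ne_zero_of_lintegral_ne_zero (hfg.trans_ne hg0)
  have hc : essSup f μ / essSup g μ ≤ 1 := le_one_of_ae_mul_le hfg.le hg0 hg hcg
  calc ∫⁻ x, (max (f x) (g x) - min (f x) (g x)) ∂μ
      ≤ 2 * (1 - essSup f μ / essSup g μ) * ∫⁻ x, g x ∂μ :=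
        lintegral_max_sub_min_le_of_ae_mul_le hf hfg.le hg hc hcg
    _ = 2 * (1 - (essSup g μ / essSup f μ)⁻¹) * ∫⁻ x, g x ∂μ := by
        rw [ENNReal.inv_div (.inr hgT) (.inl hF0)]
    _ ≤ 2 * ENNReal.ofReal (Real.log (essSup g μ / essSup f μ).toReal) * ∫⁻ x, g x ∂μ := by
        gcongr
        exact one_sub_inv_le_ofReal_log (ENNReal.div_ne_top hgT hF0)
    _ = ENNReal.ofReal (2 * Real.log (essSup g μ / essSup f μ).toReal) * ∫⁻ x, g x ∂μ := by
        rw [ENNReal.ofReal_mul zero_le_two, ENNReal.ofReal_ofNat]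

end

/-- Lemma A.2: if `f` and `g` are probability densities with respect to `μ` with finite
essential suprema and `f/‖f‖_∞ ≥ g/‖g‖_∞` `μ`-a.e., then
`∫ |f - g| dμ ≤ 2 log(‖g‖_∞/‖f‖_∞)`. -/
theorem l1_bound_ordered_densities
    {X : Type*} [MeasurableSpace X] (μ : Measure X)
    (f g : X → ℝ≥0∞) (hfm : Measurable f) (hgm : Measurable g)
    (hf1 : ∫⁻ x, f x ∂μ = 1) (hg1 : ∫⁻ x, g x ∂μ = 1)
    (hfT : essSup f μ < ⊤) (hgT : essSup g μ < ⊤)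
    (hord : ∀ᵐ x ∂μ, g x / essSup g μ ≤ f x / essSup f μ) :
    ∫⁻ x, (max (f x) (g x) - min (f x) (g x)) ∂μ ≤
      ENNReal.ofReal (2 * Real.log ((essSup g μ / essSup f μ).toReal)) := by
  simpa only [hg1, mul_one] using l1_bound_ordered_densities_general hfm.aemeasurable
    (hf1.trans hg1.symm) (hg1.trans_ne ENNReal.one_ne_top) hgT.ne hord
end
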